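/- Let d* be a minimizer of the model steepest-descent problem min over {d : x₀ + d ∈ X, ‖d‖_∞ ≤ 1} of max_ℓ ⟨∇m_ℓ(x₀), d⟩, so that ω_m(x₀) = − max_ℓ ⟨∇m_ℓ(x₀), d*⟩, and let x_PC := x₀ + σ*·d* be a Pareto-Cauchy point, i.e. σ* minimizes σ ↦ Φ_m(x₀ + σ·d*) over {σ ≥ 0 : x₀ + σ·d* ∈ B}. Then Φ_m(x₀) − Φ_m(x_PC) ≥ (1/2) · ω_m(x₀) · min{ ω_m(x₀)/(c·H), Δ, 1 }. (Theorem 5.2.) -/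

import Mathlib

noncomputable section

/-- The ℓ^∞ (maximum) norm on Euclidean space. -/
def supNorm {n : ℕ} (v : EuclideanSpace ℝ (Fin n)) : ℝ :=
  ‖(WithLp.equiv 2 (Fin n → ℝ)) v‖

/-- The multiobjective criticality measure
`ω_m(x) = − inf { max_ℓ ⟨∇m_ℓ(x), d⟩ : x + d ∈ X, ‖d‖_∞ ≤ 1 }`. -/
def omega {n k : ℕ} (X : Set (EuclideanSpace ℝ (Fin n)))
    (f : Fin k → EuclideanSpace ℝ (Fin n) → ℝ) (x : EuclideanSpace ℝ (Fin n)) : ℝ :=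
  - sInf ((fun d => ⨆ ℓ, fderiv ℝ (f ℓ) x d) ''
      {d : EuclideanSpace ℝ (Fin n) | x + d ∈ X ∧ supNorm d ≤ 1})

/-- Frobenius norm of the Hessian of `g : ℝⁿ → ℝ` at `x`. -/
def frobHess {n : ℕ} (g : EuclideanSpace ℝ (Fin n) → ℝ)
    (x : EuclideanSpace ℝ (Fin n)) : ℝ :=
  Real.sqrt (∑ i : Fin n, ∑ j : Fin n,
    (fderiv ℝ (fun y => fderiv ℝ g y (EuclideanSpace.single j (1:ℝ))) x
      (EuclideanSpace.single i (1:ℝ))) ^ 2)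

/-- Second order Taylor upper bound on `[0, s]` for a function whose second derivative is at most
`K`. -/
lemma taylor_upper_bound {φ φ' φ'' : ℝ → ℝ} {s K : ℝ} (hs : 0 ≤ s)
    (h1 : ∀ t ∈ Set.Icc 0 s, HasDerivAt φ (φ' t) t)
    (h2 : ∀ t ∈ Set.Icc 0 s, HasDerivAt φ' (φ'' t) t)
    (hK : ∀ t ∈ Set.Icc 0 s, φ'' t ≤ K) :
    φ s ≤ φ 0 + s * φ' 0 + K / 2 * s ^ 2 := by
  have hφ' : ∀ t ∈ Set.Icc 0 s, φ' t - K * t ≤ φ' 0 := by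
    have hd : ∀ t ∈ Set.Icc 0 s, HasDerivAt (fun t => φ' t - K * t) (φ'' t - K) t :=
      fun t ht => ((h2 t ht).sub ((hasDerivAt_id t).const_mul K)).congr_deriv (by simp)
    have hanti : AntitoneOn (fun t => φ' t - K * t) (Set.Icc 0 s) :=
      antitoneOn_of_hasDerivWithinAt_nonpos (convex_Icc 0 s)
        (fun t ht => (hd t ht).continuousAt.continuousWithinAt)
        (fun t ht => (hd t (interior_subset ht)).hasDerivWithinAt)
        (fun t ht => by linarith [hK t (interior_subset ht)])
    intro t ht
    simpa using hanti ⟨le_rfl, hs⟩ ht ht.1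
  have hd : ∀ t ∈ Set.Icc 0 s,
      HasDerivAt (fun t => φ t - φ' 0 * t - K / 2 * t ^ 2) (φ' t - φ' 0 - K * t) t := by
    intro t ht
    have h := ((h1 t ht).sub ((hasDerivAt_id t).const_mul (φ' 0))).sub
      ((hasDerivAt_pow 2 t).const_mul (K / 2))
    refine h.congr_deriv ?_
    push_cast
    ring
  have hanti : AntitoneOn (fun t => φ t - φ' 0 * t - K / 2 * t ^ 2) (Set.Icc 0 s) :=
    antitoneOn_of_hasDerivWithinAt_nonpos (convex_Icc 0 s)
      (fun t ht => (hd t ht).continuousAt.continuousWithinAt)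
      (fun t ht => (hd t (interior_subset ht)).hasDerivWithinAt)
      (fun t ht => by linarith [hφ' t (interior_subset ht)])
  have h := hanti ⟨le_rfl, hs⟩ ⟨hs, le_rfl⟩ hs
  simp only at h
  linarith

/-- A bilinear form is bounded by its Frobenius norm. -/
lemma bilinear_le_frobenius {n : ℕ}
    (G : EuclideanSpace ℝ (Fin n) →L[ℝ] EuclideanSpace ℝ (Fin n) →L[ℝ] ℝ)
    (d : EuclideanSpace ℝ (Fin n)) :
    G d d ≤ Real.sqrt (∑ i : Fin n, ∑ j : Fin n,
      (G (EuclideanSpace.single i (1 : ℝ)) (EuclideanSpace.single j (1 : ℝ))) ^ 2) * ‖d‖ ^ 2 := by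
  have hd : d = ∑ i, d i • EuclideanSpace.single i (1 : ℝ) := by
    simpa using ((EuclideanSpace.basisFun (Fin n) ℝ).sum_repr d).symm
  have hG : G d d = ∑ p : Fin n × Fin n,
      G (EuclideanSpace.single p.1 (1 : ℝ)) (EuclideanSpace.single p.2 (1 : ℝ)) *
        (d p.1 * d p.2) := by
    rw [Fintype.sum_prod_type]
    conv_lhs => rw [hd]
    simp only [map_sum, map_smul, sum_apply, smul_apply,
      smul_eq_mul, Finset.mul_sum]
    rw [Finset.sum_comm]
    exact Finset.sum_congr rfl fun i _ => Finset.sum_congr rfl fun j _ => by ring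
  have hnorm : ‖d‖ ^ 2 = Real.sqrt (∑ p : Fin n × Fin n, (d p.1 * d p.2) ^ 2) := by
    have : ∑ p : Fin n × Fin n, (d p.1 * d p.2) ^ 2 = (‖d‖ ^ 2) ^ 2 := by
      rw [EuclideanSpace.real_norm_sq_eq, Fintype.sum_prod_type, sq (∑ i, d i ^ 2),
        Finset.sum_mul_sum]
      simp only [mul_pow]
    rw [this, Real.sqrt_sq (by positivity)]
  rw [hG, hnorm, ← Fintype.sum_prod_type']
  exact Real.sum_mul_le_sqrt_mul_sqrt _ _ _

lemma frobHess_eq {n : ℕ} {g : EuclideanSpace ℝ (Fin n) → ℝ} {x : EuclideanSpace ℝ (Fin n)}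
    (hg : DifferentiableAt ℝ (fderiv ℝ g) x) :
    frobHess g x = Real.sqrt (∑ i : Fin n, ∑ j : Fin n,
      (fderiv ℝ (fderiv ℝ g) x (EuclideanSpace.single i (1 : ℝ))
        (EuclideanSpace.single j (1 : ℝ))) ^ 2) := by
  refine congrArg Real.sqrt (Finset.sum_congr rfl fun i _ => Finset.sum_congr rfl fun j _ => ?_)
  rw [fderiv_clm_apply hg (differentiableAt_const _)]
  simp

lemma continuousOn_frobHess {n : ℕ} {g : EuclideanSpace ℝ (Fin n) → ℝ}
    {U : Set (EuclideanSpace ℝ (Fin n))} (hU : IsOpen U) (hg : ContDiffOn ℝ 2 g U) :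
    ContinuousOn (frobHess g) U := by
  have h1 : ContDiffOn ℝ 1 (fderiv ℝ g) U := hg.fderiv_of_isOpen hU (by norm_num)
  have h2 : ContinuousOn (fderiv ℝ (fderiv ℝ g)) U := h1.continuousOn_fderiv_of_isOpen hU le_rfl
  refine ContinuousOn.congr ?_ fun x hx =>
    frobHess_eq ((h1.differentiableOn one_ne_zero).differentiableAt (hU.mem_nhds hx))
  fun_prop

/-- Second order upper bound along a segment on which the Frobenius norm of the Hessian is at
most `H`. -/
lemma le_add_fderiv_add_frobHess {n : ℕ} {g : EuclideanSpace ℝ (Fin n) → ℝ}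
    {U : Set (EuclideanSpace ℝ (Fin n))} (hU : IsOpen U) (hg : ContDiffOn ℝ 2 g U)
    {x d : EuclideanSpace ℝ (Fin n)} {s H : ℝ} (hs : 0 ≤ s)
    (hseg : ∀ t ∈ Set.Icc 0 s, x + t • d ∈ U)
    (hH : ∀ t ∈ Set.Icc 0 s, frobHess g (x + t • d) ≤ H) :
    g (x + s • d) ≤ g x + s * fderiv ℝ g x d + H * ‖d‖ ^ 2 / 2 * s ^ 2 := by
  have h1 : DifferentiableOn ℝ (fderiv ℝ g) U :=
    (hg.fderiv_of_isOpen (m := 1) hU (by norm_num)).differentiableOn one_ne_zero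
  have hline : ∀ t : ℝ, HasDerivAt (fun t : ℝ => x + t • d) d t := fun t => by
    simpa using ((hasDerivAt_id t).smul_const d).const_add x
  have hφ : ∀ t ∈ Set.Icc 0 s,
      HasDerivAt (fun t : ℝ => g (x + t • d)) (fderiv ℝ g (x + t • d) d) t := fun t ht =>
    ((hg.differentiableOn two_ne_zero).differentiableAt
      (hU.mem_nhds (hseg t ht))).hasFDerivAt.comp_hasDerivAt t (hline t)
  have hφ' : ∀ t ∈ Set.Icc 0 s, HasDerivAt (fun t : ℝ => fderiv ℝ g (x + t • d) d)
      (fderiv ℝ (fderiv ℝ g) (x + t • d) d d) t := fun t ht => by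
    have hf : HasDerivAt (fun t : ℝ => fderiv ℝ g (x + t • d))
        (fderiv ℝ (fderiv ℝ g) (x + t • d) d) t :=
      (h1.differentiableAt (hU.mem_nhds (hseg t ht))).hasFDerivAt.comp_hasDerivAt t (hline t)
    exact (ContinuousLinearMap.apply ℝ ℝ d).hasFDerivAt.comp_hasDerivAt t hf
  have hφ'' : ∀ t ∈ Set.Icc 0 s,
      fderiv ℝ (fderiv ℝ g) (x + t • d) d d ≤ H * ‖d‖ ^ 2 := fun t ht => by
    refine (bilinear_le_frobenius _ d).trans ?_
    rw [← frobHess_eq (h1.differentiableAt (hU.mem_nhds (hseg t ht)))]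
    exact mul_le_mul_of_nonneg_right (hH t ht) (by positivity)
  have h := taylor_upper_bound hs hφ hφ' hφ''
  simpa only [zero_smul, add_zero] using h

lemma supNorm_smul {n : ℕ} (t : ℝ) (v : EuclideanSpace ℝ (Fin n)) :
    supNorm (t • v) = |t| * supNorm v := by
  have : (WithLp.equiv 2 (Fin n → ℝ)) (t • v) = t • (WithLp.equiv 2 (Fin n → ℝ)) v := rfl
  rw [supNorm, this, norm_smul, Real.norm_eq_abs, supNorm]

lemma supNorm_nonneg {n : ℕ} (v : EuclideanSpace ℝ (Fin n)) : 0 ≤ supNorm v := norm_nonneg _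

/-- Theorem 5.2: the Pareto–Cauchy point `x_PC = x₀ + σ*·d*` along the model
steepest-descent direction `d*` achieves the sufficient decrease
`Φ_m(x₀) − Φ_m(x_PC) ≥ (1/2)·ω_m(x₀)·min{ω_m(x₀)/(c·H), Δ, 1}`. -/
theorem pareto_cauchy_sufficient_decrease
    (n k : ℕ) (hk : 1 ≤ k)
    (X : Set (EuclideanSpace ℝ (Fin n)))
    (hXne : X.Nonempty) (hXconv : Convex ℝ X) (hXcomp : IsCompact X)
    (m : Fin k → EuclideanSpace ℝ (Fin n) → ℝ)
    (U : Set (EuclideanSpace ℝ (Fin n))) (hUopen : IsOpen U) (hXU : X ⊆ U)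
    (hm : ∀ ℓ, ContDiffOn ℝ 2 (m ℓ) U)
    (x₀ : EuclideanSpace ℝ (Fin n)) (hx₀ : x₀ ∈ X)
    (Δ : ℝ) (hΔ : 0 < Δ)
    (B : Set (EuclideanSpace ℝ (Fin n))) (hB : B = {y ∈ X | supNorm (y - x₀) ≤ Δ})
    (H : ℝ) (hH : H = ⨆ ℓ : Fin k, ⨆ y : B, frobHess (m ℓ) (y : EuclideanSpace ℝ (Fin n)))
    (c : ℝ) (hc : 0 < c)
    (hcn : ∀ v : EuclideanSpace ℝ (Fin n), ‖v‖ ≤ Real.sqrt c * supNorm v)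
    -- `d*` is a minimizer of the model steepest-descent problem at `x₀`
    (dstar : EuclideanSpace ℝ (Fin n))
    (hd1 : x₀ + dstar ∈ X) (hd2 : supNorm dstar ≤ 1)
    (hdmin : ∀ d : EuclideanSpace ℝ (Fin n), x₀ + d ∈ X → supNorm d ≤ 1 →
      (⨆ ℓ, fderiv ℝ (m ℓ) x₀ dstar) ≤ (⨆ ℓ, fderiv ℝ (m ℓ) x₀ d))
    (hω : omega X m x₀ = -(⨆ ℓ, fderiv ℝ (m ℓ) x₀ dstar))
    -- `σ*` minimizes `Φ_m(x₀ + σ·d*)` over `{σ ≥ 0 : x₀ + σ·d* ∈ B}`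
    (σstar : ℝ) (hσ0 : 0 ≤ σstar) (hσB : x₀ + σstar • dstar ∈ B)
    (hσmin : ∀ σ : ℝ, 0 ≤ σ → x₀ + σ • dstar ∈ B →
      (⨆ ℓ, m ℓ (x₀ + σstar • dstar)) ≤ ⨆ ℓ, m ℓ (x₀ + σ • dstar)) :
    (⨆ ℓ, m ℓ x₀) - (⨆ ℓ, m ℓ (x₀ + σstar • dstar))
      ≥ (1/2) * omega X m x₀ * min (omega X m x₀ / (c * H)) (min Δ 1) := by
  have : Nonempty (Fin k) := ⟨⟨0, hk⟩⟩
  set ω := omega X m x₀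
  have hω0 : 0 ≤ ω := by
    have h := hdmin 0 (by simpa using hx₀) (by simp [supNorm])
    simp only [map_zero, ciSup_const] at h
    linarith
  have hH0 : 0 ≤ H := hH ▸ Real.iSup_nonneg fun ℓ => Real.iSup_nonneg fun y => Real.sqrt_nonneg _
  have hBX : B ⊆ X := hB ▸ fun y hy => hy.1
  have hfrob : ∀ ℓ, ∀ y ∈ B, frobHess (m ℓ) y ≤ H := by
    intro ℓ y hy
    have hbdd : BddAbove (Set.range fun y : B => frobHess (m ℓ) (y : EuclideanSpace ℝ (Fin n))) := by
      refine (hXcomp.bddAbove_image ((continuousOn_frobHess hUopen (hm ℓ)).mono hXU)).mono ?_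
      rintro _ ⟨z, rfl⟩
      exact ⟨z, hBX z.2, rfl⟩
    rw [hH]
    exact (le_ciSup hbdd ⟨y, hy⟩).trans (le_ciSup (f := fun ℓ : Fin k =>
      ⨆ y : B, frobHess (m ℓ) (y : EuclideanSpace ℝ (Fin n))) (Set.finite_range _).bddAbove ℓ)
  set s := min (ω / (c * H)) (min Δ 1)
  have hs0 : 0 ≤ s := le_min (by positivity) (le_min hΔ.le zero_le_one)
  have hsΔ : s ≤ Δ := (min_le_right _ _).trans (min_le_left _ _)
  have hs1 : s ≤ 1 := (min_le_right _ _).trans (min_le_right _ _)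
  have hscH : s * (c * H) ≤ ω := by
    rcases hH0.eq_or_lt with h0 | hpos
    · simpa [← h0] using hω0
    · exact (le_div_iff₀ (by positivity)).1 (min_le_left _ _)
  have hsegB : ∀ t ∈ Set.Icc 0 s, x₀ + t • dstar ∈ B := by
    intro t ht
    rw [hB]
    refine ⟨?_, ?_⟩
    · simpa using hXconv.add_smul_sub_mem hx₀ hd1 ⟨ht.1, ht.2.trans hs1⟩
    · rw [add_sub_cancel_left, supNorm_smul, abs_of_nonneg ht.1]
      nlinarith [ht.1, ht.2, supNorm_nonneg dstar]
  have hdc : ‖dstar‖ ^ 2 ≤ c := by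
    have h : ‖dstar‖ ≤ Real.sqrt c :=
      (hcn dstar).trans (mul_le_of_le_one_right (Real.sqrt_nonneg c) hd2)
    calc ‖dstar‖ ^ 2 ≤ Real.sqrt c ^ 2 := by gcongr
      _ = c := Real.sq_sqrt hc.le
  have hdecr : ∀ ℓ, m ℓ (x₀ + s • dstar) ≤ (⨆ ℓ, m ℓ x₀) - 1 / 2 * ω * s := by
    intro ℓ
    have htaylor := le_add_fderiv_add_frobHess hUopen (hm ℓ) hs0
      (fun t ht => hXU (hBX (hsegB t ht))) (fun t ht => hfrob ℓ _ (hsegB t ht))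
    have hΦ : m ℓ x₀ ≤ ⨆ ℓ, m ℓ x₀ :=
      le_ciSup (f := fun ℓ => m ℓ x₀) (Set.finite_range _).bddAbove ℓ
    have hslope : fderiv ℝ (m ℓ) x₀ dstar ≤ -ω := by
      rw [hω, neg_neg]
      exact le_ciSup (f := fun ℓ => fderiv ℝ (m ℓ) x₀ dstar) (Set.finite_range _).bddAbove ℓ
    have hlin : s * fderiv ℝ (m ℓ) x₀ dstar ≤ s * -ω := mul_le_mul_of_nonneg_left hslope hs0
    have hquad : H * ‖dstar‖ ^ 2 / 2 * s ^ 2 ≤ ω * s / 2 := by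
      calc H * ‖dstar‖ ^ 2 / 2 * s ^ 2 ≤ H * c / 2 * s ^ 2 := by gcongr
        _ = s * (c * H) * s / 2 := by ring
        _ ≤ ω * s / 2 := by gcongr
    linarith
  have hmin := (hσmin s hs0 (hsegB s ⟨hs0, le_rfl⟩)).trans (ciSup_le hdecr)
  linarith
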